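/- Objective bound under a fixed indicator for the regularized relaxation: suppose (x*, t*, z*) is an optimal solution attaining η_CR and let α and δ be defined from x*. Fix an index j. If μ − γ·δ_j ≥ 0, then every (x, t, z) feasible for the conic relaxation (t_l ≥ 0, z ∈ [0,1]^n, x_l² ≤ z_l t_l for all l) with z_j = 1 satisfies L(x) + (1/γ) Σ_{l=1}^n t_l + μ Σ_{l=1}^n z_l ≥ η_CR + (μ − γ·δ_j). Symmetrically, if μ − γ·δ_j ≤ 0, then every such feasible (x, t, z) with z_j = 0 satisfies L(x) + (1/γ) Σ_{l=1}^n t_l + μ Σ_{l=1}^n z_l ≥ η_CR − (μ − γ·δ_j). -/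

import Mathlib

/-- The logistic loss `L(x) = (1/m) ∑ᵢ log (1 + exp (-yᵢ (A x)ᵢ))`. -/
noncomputable def logLoss (m n : ℕ) (A : Fin m → Fin n → ℝ) (y : Fin m → ℝ)
    (x : Fin n → ℝ) : ℝ :=
  (1 / (m : ℝ)) * ∑ i, Real.log (1 + Real.exp (-(y i) * ∑ j, A i j * x j))

/-!
Since the feasible set is convex, an optimal point `(x*, t*, z*)` remains optimal when the loss is
replaced by its linearization at `x*`. The linearized problem splits over the coordinates: with
`g = ∇L(x*)`, so that `δ_l = g_l² / 4`, AM-GM bounds the `l`-th term `g_l x_l + t_l / γ + μ z_l`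
below by `(μ - γ δ_l) z_l`, and for every value of `z_l` equality is attained. Convexity of the loss
then shows that any feasible `(x, t, z)` and any `w ∈ [0, 1]ⁿ` satisfy
`objective (x, t, z) ≥ η_CR + ∑ l, (μ - γ δ_l) (z_l - w_l)`. Letting `w` differ from `z` only in the
coordinate `j`, where it is flipped, gives both bounds.
-/

open Set

section FirstOrder

variable {E : Type*} [NormedAddCommGroup E] [NormedSpace ℝ E] {f : E → ℝ} {f' : E →L[ℝ] ℝ}
  {s : Set E} {a b : E}

lemma isMinOn_fderiv_of_isLocalMinOn (hs : Convex ℝ s) (ha : a ∈ s)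
    (hf : HasFDerivWithinAt f f' s a) (hmin : IsLocalMinOn f s a) : IsMinOn f' s a := by
  intro b hb
  have hdir : b - a ∈ posTangentConeAt s a :=
    sub_mem_posTangentConeAt_of_segment_subset (hs.segment_subset ha hb)
  have hnonneg : 0 ≤ f' (b - a) := hmin.hasFDerivWithinAt_nonneg hf hdir
  rwa [map_sub, sub_nonneg] at hnonneg

lemma add_fderiv_sub_le_of_convexOn (hconv : ConvexOn ℝ s f) (ha : a ∈ s) (hb : b ∈ s)
    (hf : HasFDerivAt f f' a) : f a + f' (b - a) ≤ f b := by
  have hconvLine : ConvexOn ℝ (AffineMap.lineMap a b ⁻¹' s) (f ∘ AffineMap.lineMap a b) :=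
    hconv.comp_affineMap (AffineMap.lineMap a b)
  have hderivLine : HasDerivAt (f ∘ AffineMap.lineMap a b) (f' (b - a)) (0 : ℝ) :=
    HasFDerivAt.comp_hasDerivAt 0 (by simpa using hf) AffineMap.hasDerivAt_lineMap
  have hslope : f' (b - a) ≤ slope (f ∘ AffineMap.lineMap a b) (0 : ℝ) 1 :=
    hconvLine.le_slope_of_hasDerivAt (by simpa using ha) (by simpa using hb) one_pos hderivLine
  simp only [slope_def_field, Function.comp_apply, AffineMap.lineMap_apply_one,
    AffineMap.lineMap_apply_zero, sub_zero, div_one] at hslope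
  linarith

end FirstOrder

/-- The continuous linear functional `x ↦ ∑ l, g l * x l`, through which derivatives of functions
on `ι → ℝ` are expressed by their gradients. -/
noncomputable def dotProductCLM {ι : Type*} [Fintype ι] (g : ι → ℝ) : (ι → ℝ) →L[ℝ] ℝ :=
  ∑ l, g l • ContinuousLinearMap.proj l

@[simp]
lemma dotProductCLM_apply {ι : Type*} [Fintype ι] (g x : ι → ℝ) :
    dotProductCLM g x = ∑ l, g l * x l := by
  simp [dotProductCLM]

lemma sum_smul_dotProductCLM {ι κ : Type*} [Fintype ι] [Fintype κ] (c : κ → ℝ)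
    (A : κ → ι → ℝ) :
    ∑ i, c i • dotProductCLM (A i) = dotProductCLM fun l => ∑ i, c i * A i l := by
  simp only [dotProductCLM, Finset.smul_sum, Finset.sum_smul, smul_smul]
  exact Finset.sum_comm

section Relaxation

/-- The feasible set of the conic relaxation; a point is a triple `(x, t, z)`. -/
def conicRelaxation (ι : Type*) : Set ((ι → ℝ) × (ι → ℝ) × (ι → ℝ)) :=
  {p | (∀ l, 0 ≤ p.2.1 l) ∧ (∀ l, 0 ≤ p.2.2 l ∧ p.2.2 l ≤ 1) ∧
    ∀ l, p.1 l ^ 2 ≤ p.2.2 l * p.2.1 l}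

/-- The objective of the conic relaxation at `(x, t, z)`, for an arbitrary loss `L`. -/
noncomputable def conicObjective {ι : Type*} [Fintype ι] (L : (ι → ℝ) → ℝ) (γ μ : ℝ)
    (p : (ι → ℝ) × (ι → ℝ) × (ι → ℝ)) : ℝ :=
  L p.1 + (1 / γ) * ∑ l, p.2.1 l + μ * ∑ l, p.2.2 l

/-- `conicObjective` with a linear loss, bundled as a continuous linear functional: it is the
derivative of the objective when `L'` is the derivative of the loss. -/
noncomputable def conicObjectiveCLM {ι : Type*} [Fintype ι] (L' : (ι → ℝ) →L[ℝ] ℝ) (γ μ : ℝ) :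
    (ι → ℝ) × (ι → ℝ) × (ι → ℝ) →L[ℝ] ℝ :=
  L'.coprod (((1 / γ) • dotProductCLM 1).coprod (μ • dotProductCLM 1))

/-- The least value `μ - γ g² / 4` of `g x + t / γ + μ` over `x² ≤ t` for `γ > 0`: the
marginal cost of an indicator when the loss has slope `g` in its coordinate. -/
noncomputable def reducedCost (γ μ g : ℝ) : ℝ :=
  μ - γ * ((1 / 4) * g ^ 2)

variable {ι : Type*}

lemma sq_combo_le_combo_mul_combo {a b x₁ x₂ t₁ t₂ z₁ z₂ : ℝ} (ha : 0 ≤ a) (hb : 0 ≤ b)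
    (ht₁ : 0 ≤ t₁) (ht₂ : 0 ≤ t₂) (hz₁ : 0 ≤ z₁) (hz₂ : 0 ≤ z₂)
    (h₁ : x₁ ^ 2 ≤ z₁ * t₁) (h₂ : x₂ ^ 2 ≤ z₂ * t₂) :
    (a * x₁ + b * x₂) ^ 2 ≤ (a * z₁ + b * z₂) * (a * t₁ + b * t₂) := by
  have hcross : 2 * (x₁ * x₂) ≤ z₁ * t₂ + z₂ * t₁ := by
    refine two_mul_le_add_of_sq_le_mul (by positivity) (by positivity) ?_
    calc (x₁ * x₂) ^ 2 = x₁ ^ 2 * x₂ ^ 2 := mul_pow _ _ _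
      _ ≤ z₁ * t₁ * (z₂ * t₂) := by gcongr
      _ = z₁ * t₂ * (z₂ * t₁) := by ring
  calc (a * x₁ + b * x₂) ^ 2
      = a ^ 2 * x₁ ^ 2 + b ^ 2 * x₂ ^ 2 + a * b * (2 * (x₁ * x₂)) := by ring
    _ ≤ a ^ 2 * (z₁ * t₁) + b ^ 2 * (z₂ * t₂) + a * b * (z₁ * t₂ + z₂ * t₁) := by gcongr
    _ = (a * z₁ + b * z₂) * (a * t₁ + b * t₂) := by ring

lemma convex_conicRelaxation : Convex ℝ (conicRelaxation ι) := by
  rintro p ⟨hpt, hpz, hpcone⟩ q ⟨hqt, hqz, hqcone⟩ a b ha hb hab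
  refine ⟨fun l => ?_, fun l => ?_, fun l => ?_⟩
  · exact add_nonneg (mul_nonneg ha (hpt l)) (mul_nonneg hb (hqt l))
  · exact convex_Icc (0 : ℝ) 1 (hpz l) (hqz l) ha hb hab
  · exact sq_combo_le_combo_mul_combo ha hb (hpt l) (hqt l) (hpz l).1 (hqz l).1
      (hpcone l) (hqcone l)

lemma reducedCost_mul_le {γ μ g x t z : ℝ} (hγ : 0 < γ) (ht : 0 ≤ t) (hz : 0 ≤ z)
    (hcone : x ^ 2 ≤ z * t) : reducedCost γ μ g * z ≤ g * x + (1 / γ) * t + μ * z := by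
  have hamgm : 2 * (-(g * x) / 2) ≤ (1 / γ) * t + γ * ((1 / 4) * g ^ 2) * z := by
    refine two_mul_le_add_of_sq_le_mul (by positivity) (by positivity) ?_
    calc (-(g * x) / 2) ^ 2 = (1 / 4) * g ^ 2 * x ^ 2 := by ring
      _ ≤ (1 / 4) * g ^ 2 * (z * t) := by gcongr
      _ = (1 / γ) * t * (γ * ((1 / 4) * g ^ 2) * z) := by field_simp
  unfold reducedCost
  linarith

variable [Fintype ι] {L : (ι → ℝ) → ℝ} {L' : (ι → ℝ) →L[ℝ] ℝ} {γ μ : ℝ} {g w : ι → ℝ}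
  {p q : (ι → ℝ) × (ι → ℝ) × (ι → ℝ)}

lemma coe_conicObjectiveCLM (L' : (ι → ℝ) →L[ℝ] ℝ) (γ μ : ℝ) :
    ⇑(conicObjectiveCLM L' γ μ) = conicObjective L' γ μ := by
  ext p
  simp [conicObjectiveCLM, conicObjective, add_assoc]

lemma hasFDerivAt_conicObjective (hL : HasFDerivAt L L' p.1) :
    HasFDerivAt (conicObjective L γ μ) (conicObjectiveCLM L' γ μ) p := by
  have hsplit : conicObjective L γ μ = fun q => L q.1 + conicObjectiveCLM 0 γ μ q := by
    ext q
    simp [coe_conicObjectiveCLM, conicObjective, add_assoc]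
  rw [hsplit]
  refine ((hL.comp p hasFDerivAt_fst).add (conicObjectiveCLM 0 γ μ).hasFDerivAt).congr_fderiv ?_
  ext v <;> simp [conicObjectiveCLM]

lemma isMinOn_conicObjective_linearization (hL : HasFDerivAt L L' p.1)
    (hp : p ∈ conicRelaxation ι)
    (hopt : IsMinOn (conicObjective L γ μ) (conicRelaxation ι) p) :
    IsMinOn (conicObjective L' γ μ) (conicRelaxation ι) p := by
  rw [← coe_conicObjectiveCLM]
  exact isMinOn_fderiv_of_isLocalMinOn convex_conicRelaxation hp
    (hasFDerivAt_conicObjective hL).hasFDerivWithinAt hopt.localize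

lemma conicObjective_add_linearization_sub_le (hconv : ConvexOn ℝ univ L)
    (hL : HasFDerivAt L L' p.1) :
    conicObjective L γ μ p + (conicObjective L' γ μ q - conicObjective L' γ μ p) ≤
      conicObjective L γ μ q := by
  have htangent : L p.1 + L' (q.1 - p.1) ≤ L q.1 :=
    add_fderiv_sub_le_of_convexOn hconv (mem_univ _) (mem_univ _) hL
  rw [map_sub] at htangent
  unfold conicObjective
  linarith

lemma conicObjective_dotProductCLM :
    conicObjective (dotProductCLM g) γ μ p =
      ∑ l, (g l * p.1 l + (1 / γ) * p.2.1 l + μ * p.2.2 l) := by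
  simp only [conicObjective, dotProductCLM_apply, Finset.sum_add_distrib, Finset.mul_sum]

lemma sum_reducedCost_mul_le_conicObjective (hγ : 0 < γ) (hq : q ∈ conicRelaxation ι) :
    ∑ l, reducedCost γ μ (g l) * q.2.2 l ≤ conicObjective (dotProductCLM g) γ μ q := by
  rw [conicObjective_dotProductCLM]
  exact Finset.sum_le_sum fun l _ =>
    reducedCost_mul_le hγ (hq.1 l) (hq.2.1 l).1 (hq.2.2 l)

lemma exists_conicObjective_eq_sum_reducedCost_mul (hw : w ∈ Icc 0 1) :
    ∃ p ∈ conicRelaxation ι,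
      conicObjective (dotProductCLM g) γ μ p = ∑ l, reducedCost γ μ (g l) * w l := by
  -- The equality case of the AM-GM bound.
  refine ⟨(fun l => -(γ * g l / 2) * w l, fun l => (γ * g l / 2) ^ 2 * w l, w),
    ⟨fun l => mul_nonneg (sq_nonneg _) (hw.1 l), fun l => ⟨hw.1 l, hw.2 l⟩,
      fun l => le_of_eq (by ring)⟩, ?_⟩
  rw [conicObjective_dotProductCLM]
  refine Finset.sum_congr rfl fun l _ => ?_
  unfold reducedCost
  field_simp
  ring

lemma conicObjective_add_sum_reducedCost_mul_sub_le (hconv : ConvexOn ℝ univ L)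
    (hL : HasFDerivAt L (dotProductCLM g) p.1) (hγ : 0 < γ) (hp : p ∈ conicRelaxation ι)
    (hopt : IsMinOn (conicObjective L γ μ) (conicRelaxation ι) p) (hq : q ∈ conicRelaxation ι)
    (hw : w ∈ Icc 0 1) :
    conicObjective L γ μ p + ∑ l, reducedCost γ μ (g l) * (q.2.2 l - w l) ≤
      conicObjective L γ μ q := by
  obtain ⟨r, hr, hr_eq⟩ :=
    exists_conicObjective_eq_sum_reducedCost_mul (g := g) (γ := γ) (μ := μ) hw
  have hupper : conicObjective (dotProductCLM g) γ μ p ≤ ∑ l, reducedCost γ μ (g l) * w l :=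
    hr_eq ▸ isMinOn_conicObjective_linearization hL hp hopt hr
  calc conicObjective L γ μ p + ∑ l, reducedCost γ μ (g l) * (q.2.2 l - w l)
      = conicObjective L γ μ p + (∑ l, reducedCost γ μ (g l) * q.2.2 l -
          ∑ l, reducedCost γ μ (g l) * w l) := by
        simp only [mul_sub, Finset.sum_sub_distrib]
    _ ≤ conicObjective L γ μ p + (conicObjective (dotProductCLM g) γ μ q -
          conicObjective (dotProductCLM g) γ μ p) := by
        gcongr
        exact sum_reducedCost_mul_le_conicObjective hγ hq
    _ ≤ conicObjective L γ μ q := conicObjective_add_linearization_sub_le hconv hL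

end Relaxation

section Logistic

lemma hasDerivAt_log_one_add_exp (u : ℝ) :
    HasDerivAt (fun u => Real.log (1 + Real.exp u)) (Real.sigmoid u) u := by
  refine (((Real.hasDerivAt_exp u).const_add 1).log (by positivity)).congr_deriv ?_
  rw [Real.sigmoid_def, Real.exp_neg]
  field_simp
  ring

lemma convexOn_log_one_add_exp : ConvexOn ℝ univ fun u => Real.log (1 + Real.exp u) := by
  refine Monotone.convexOn_univ_of_deriv
    (fun u => (hasDerivAt_log_one_add_exp u).differentiableAt) ?_
  rw [deriv_eq hasDerivAt_log_one_add_exp]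
  exact Real.sigmoid_monotone

variable {m n : ℕ} (A : Fin m → Fin n → ℝ) (y : Fin m → ℝ)

lemma logLoss_eq_sum_dotProductCLM :
    logLoss m n A y = fun x =>
      (1 / (m : ℝ)) * ∑ i, Real.log (1 + Real.exp ((-(y i) • dotProductCLM (A i)) x)) := by
  ext x
  simp [logLoss]

lemma convexOn_logLoss : ConvexOn ℝ univ (logLoss m n A y) := by
  rw [logLoss_eq_sum_dotProductCLM]
  have hterm (i : Fin m) : ConvexOn ℝ univ fun x =>
      Real.log (1 + Real.exp ((-(y i) • dotProductCLM (A i)) x)) :=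
    convexOn_log_one_add_exp.comp_linearMap (-(y i) • dotProductCLM (A i)).toLinearMap
  have hsum : ConvexOn ℝ univ (∑ i, fun x =>
      Real.log (1 + Real.exp ((-(y i) • dotProductCLM (A i)) x))) :=
    Finset.sum_induction _ (ConvexOn ℝ univ) (fun _ _ => ConvexOn.add)
      (convexOn_const 0 convex_univ) fun i _ => hterm i
  simpa [Pi.smul_def] using hsum.smul (one_div_nonneg.2 m.cast_nonneg : (0 : ℝ) ≤ 1 / m)

lemma hasFDerivAt_logLoss (x : Fin n → ℝ) :
    HasFDerivAt (logLoss m n A y) (dotProductCLM fun l => -∑ i,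
      y i / ((m : ℝ) * (1 + Real.exp (y i * ∑ j, A i j * x j))) * A i l) x := by
  rw [logLoss_eq_sum_dotProductCLM]
  have hterm (i : Fin m) := (hasDerivAt_log_one_add_exp
    ((-(y i) • dotProductCLM (A i)) x)).comp_hasFDerivAt x
      (-(y i) • dotProductCLM (A i)).hasFDerivAt
  refine ((HasFDerivAt.fun_sum fun i _ => hterm i).const_mul (1 / (m : ℝ))).congr_fderiv ?_
  have hcoeff (i : Fin m) :
      (1 / (m : ℝ)) * (Real.sigmoid ((-(y i) • dotProductCLM (A i)) x) * -(y i)) =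
        -(y i / ((m : ℝ) * (1 + Real.exp (y i * ∑ j, A i j * x j)))) := by
    simp only [smul_apply, dotProductCLM_apply, smul_eq_mul, Real.sigmoid_def, neg_mul, neg_neg]
    field_simp
  rw [Finset.smul_sum]
  simp only [smul_smul, hcoeff, sum_smul_dotProductCLM, neg_mul, Finset.sum_neg_distrib]

end Logistic

theorem objective_bound_fixed_indicator_REG_general {ι : Type*} [Fintype ι]
    {L : (ι → ℝ) → ℝ} {g : ι → ℝ} {γ μ : ℝ} {p q : (ι → ℝ) × (ι → ℝ) × (ι → ℝ)}
    (hconv : ConvexOn ℝ univ L) (hL : HasFDerivAt L (dotProductCLM g) p.1) (hγ : 0 < γ)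
    (hp : p ∈ conicRelaxation ι)
    (hopt : IsMinOn (conicObjective L γ μ) (conicRelaxation ι) p)
    (hq : q ∈ conicRelaxation ι) (j : ι) {ω : ℝ} (hω : ω ∈ Icc 0 1) :
    conicObjective L γ μ p + reducedCost γ μ (g j) * (q.2.2 j - ω) ≤
      conicObjective L γ μ q := by
  classical
  have hw : Function.update q.2.2 j ω ∈ Icc 0 1 :=
    ⟨le_update_iff.2 ⟨hω.1, fun l _ => (hq.2.1 l).1⟩,
      update_le_iff.2 ⟨hω.2, fun l _ => (hq.2.1 l).2⟩⟩
  have hsum : ∑ l, reducedCost γ μ (g l) * (q.2.2 l - Function.update q.2.2 j ω l) =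
      reducedCost γ μ (g j) * (q.2.2 j - ω) := by
    rw [Finset.sum_eq_single_of_mem j (Finset.mem_univ j) fun l _ hl => by simp [hl],
      Function.update_self]
  exact hsum ▸ conicObjective_add_sum_reducedCost_mul_sub_le hconv hL hγ hp hopt hq hw

/-- Objective bound under a fixed indicator for the regularized relaxation:
if `(xs, ts, zs)` is an optimal solution attaining `ηCR` and `α`, `δ` are defined
from `xs`, then for a fixed index `j`: if `μ - γ δ_j ≥ 0`, every feasible `(x, t, z)`
of the conic relaxation with `z j = 1` has objective at least `ηCR + (μ - γ δ_j)`;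
if `μ - γ δ_j ≤ 0`, every feasible `(x, t, z)` with `z j = 0` has objective at least
`ηCR - (μ - γ δ_j)`. -/
theorem objective_bound_fixed_indicator_REG
    (m n : ℕ) (hm : 0 < m) (hn : 0 < n)
    (A : Fin m → Fin n → ℝ) (y : Fin m → ℝ) (hy : ∀ i, y i = 1 ∨ y i = -1)
    (γ μ : ℝ) (hγ : 0 < γ) (hμ : 0 < μ)
    -- (xs, ts, zs) is an optimal solution of the conic relaxation attaining ηCR
    (xs ts zs : Fin n → ℝ)
    (hts : ∀ l, 0 ≤ ts l) (hzs : ∀ l, 0 ≤ zs l ∧ zs l ≤ 1)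
    (hcone_s : ∀ l, (xs l) ^ 2 ≤ zs l * ts l)
    (hopt : ∀ x t z : Fin n → ℝ, (∀ l, 0 ≤ t l) → (∀ l, 0 ≤ z l ∧ z l ≤ 1) →
      (∀ l, (x l) ^ 2 ≤ z l * t l) →
      logLoss m n A y xs + (1 / γ) * ∑ l, ts l + μ * ∑ l, zs l ≤
        logLoss m n A y x + (1 / γ) * ∑ l, t l + μ * ∑ l, z l)
    (ηCR : ℝ)
    (hηCR : ηCR = logLoss m n A y xs + (1 / γ) * ∑ l, ts l + μ * ∑ l, zs l)
    -- dual quantities defined from xs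
    (α : Fin m → ℝ)
    (hα : ∀ i, α i = y i / ((m : ℝ) * (1 + Real.exp (y i * ∑ j, A i j * xs j))))
    (δ : Fin n → ℝ)
    (hδ : ∀ l, δ l = (1 / 4) * (∑ i, α i * A i l) ^ 2)
    (j : Fin n) :
    (0 ≤ μ - γ * δ j →
      ∀ x t z : Fin n → ℝ, (∀ l, 0 ≤ t l) → (∀ l, 0 ≤ z l ∧ z l ≤ 1) →
        (∀ l, (x l) ^ 2 ≤ z l * t l) → z j = 1 →
        ηCR + (μ - γ * δ j) ≤
          logLoss m n A y x + (1 / γ) * ∑ l, t l + μ * ∑ l, z l) ∧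
    (μ - γ * δ j ≤ 0 →
      ∀ x t z : Fin n → ℝ, (∀ l, 0 ≤ t l) → (∀ l, 0 ≤ z l ∧ z l ≤ 1) →
        (∀ l, (x l) ^ 2 ≤ z l * t l) → z j = 0 →
        ηCR - (μ - γ * δ j) ≤
          logLoss m n A y x + (1 / γ) * ∑ l, t l + μ * ∑ l, z l) := by
  obtain rfl : α = _ := funext hα
  have hbound q hq ω hω := objective_bound_fixed_indicator_REG_general (p := (xs, ts, zs)) (q := q)
    (ω := ω) (convexOn_logLoss A y) (hasFDerivAt_logLoss A y xs) hγ ⟨hts, hzs, hcone_s⟩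
    (fun q hq => hopt q.1 q.2.1 q.2.2 hq.1 hq.2.1 hq.2.2) hq j hω
  simp only [conicObjective, reducedCost, neg_sq, ← hδ, ← hηCR] at hbound
  refine ⟨fun _ x t z ht hz hcone hzj => ?_, fun _ x t z ht hz hcone hzj => ?_⟩
  · simpa [hzj] using hbound (x, t, z) ⟨ht, hz, hcone⟩ 0 (left_mem_Icc.2 zero_le_one)
  · simpa [hzj, sub_eq_add_neg] using
      hbound (x, t, z) ⟨ht, hz, hcone⟩ 1 (right_mem_Icc.2 zero_le_one)
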